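/- Fix l, r ∈ ℝ and let α, β, γ be built from c := |l| + |r|. Assume there exists a real-valued absolutely continuous function g on [a,b] with g(a) = g(b) = 0, ∫ₐᵇ p|g'|² < ∞, and g(x)w(x) > 0 a.e. on (a,b), and let ε > 0 satisfy μ_{1/p}({x ∈ [a,b] : p(x)g(x)w(x) < ε}) ≤ 1/(2γ²). Then every λ ∈ ℂ with Im λ ≠ 0 for which there exists a solution (φ, u) of −(pφ')' + qφ = λwφ with φ not identically zero and u(a) = l·φ(a), u(b) = r·φ(b), satisfies |Im λ| ≤ (2/ε)·β·γ·‖g'‖_{p,2} and |Re λ| ≤ (2/ε)·(β·γ·‖g'‖_{p,2} + (β² + γ²‖q‖_{L¹})·‖g‖_∞). -/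

import Mathlib

open MeasureTheory Real Complex

/-! Let `D` and `N` be the norms of `p φ'` and `φ` in `L²` with weight `1 / p`, and `M = ‖φ‖_∞`.
Multiplying the equation by `conj φ` and integrating by parts gives `⟨boundary term⟩ =
∫ (p |φ'|² + q |φ|²) - λ ∫ w |φ|²`. If the boundary term is real and `Im λ ≠ 0`, then
`∫ w |φ|² = 0` and `D² ≤ α M²`. Averaging `|φ(x)|² ≤ |φ(y)|² + 2 ∫ |φ φ'|` over `y` against `1 / p`
gives `M² ≤ N² / ‖1/p‖₁ + 2 D N`, and together these yield `D ≤ β N` and `M ≤ γ N`.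

Multiplying by `g conj φ` instead, the boundary term vanishes and
`λ ∫ g w |φ|² = ∫ g' (p φ') conj φ + ∫ g (p |φ'|² + q |φ|²)`, where the right-hand side is of order
`N²`. Where `p g w ≥ ε` the integrand on the left is at least `ε |φ|² / p`, and the remaining set
carries at most half of `N²` because `|φ|² ≤ γ² N²` there, so `∫ g w |φ|² ≥ ε N² / 2`.
-/

section Primitives

open Set Topology

variable {E F A : Type*} [NormedAddCommGroup E] [NormedSpace ℝ E]
  [NormedAddCommGroup F] [NormedSpace ℝ F]
  [NormedRing A] [NormMulClass A] [NormedAlgebra ℝ A] [CompleteSpace A] {a b : ℝ}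

/-- `F` is absolutely continuous on the interval with endpoints `a` and `b`, with almost everywhere
derivative `f`. It is encoded by the fundamental theorem of calculus, so `F` may be arbitrary
outside the interval. -/
structure IsPrimitiveOn (F f : ℝ → E) (a b : ℝ) : Prop where
  intervalIntegrable : IntervalIntegrable f volume a b
  eq_add_integral : ∀ x ∈ uIcc a b, F x = F a + ∫ t in a..x, f t

theorem isPrimitiveOn_integral {f : ℝ → E} (hf : IntervalIntegrable f volume a b) :
    IsPrimitiveOn (fun x => ∫ t in a..x, f t) f a b :=
  ⟨hf, fun x _ => by simp⟩

namespace IsPrimitiveOn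

theorem integral_eq_sub {F f : ℝ → E} (hF : IsPrimitiveOn F f a b) {x y : ℝ}
    (hx : x ∈ uIcc a b) (hy : y ∈ uIcc a b) : ∫ t in x..y, f t = F y - F x := by
  have integrable_to {z : ℝ} (hz : z ∈ uIcc a b) : IntervalIntegrable f volume a z :=
    hF.intervalIntegrable.mono_set (uIcc_subset_uIcc left_mem_uIcc hz)
  rw [hF.eq_add_integral x hx, hF.eq_add_integral y hy, add_sub_add_left_eq_sub,
    intervalIntegral.integral_interval_sub_left (integrable_to hy) (integrable_to hx)]

theorem absolutelyContinuousOnInterval {F f : ℝ → E} (hF : IsPrimitiveOn F f a b) :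
    AbsolutelyContinuousOnInterval F a b := by
  have hnorm := isPrimitiveOn_integral hF.intervalIntegrable.norm
  have hac := hF.intervalIntegrable.norm.absolutelyContinuousOnInterval_intervalIntegral
    left_mem_uIcc
  rw [absolutelyContinuousOnInterval_iff] at hac ⊢
  intro ε hε
  obtain ⟨δ, hδ, hsum⟩ := hac ε hε
  refine ⟨δ, hδ, fun I hI hIδ => (Finset.sum_le_sum fun i hi => ?_).trans_lt (hsum I hI hIδ)⟩
  obtain ⟨hl, hr⟩ := hI.1 i hi
  rw [dist_comm, dist_eq_norm, ← hF.integral_eq_sub hl hr, dist_comm, dist_eq_norm,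
    ← hnorm.integral_eq_sub hl hr]
  exact intervalIntegral.norm_integral_le_abs_integral_norm

theorem continuousOn {F f : ℝ → E} (hF : IsPrimitiveOn F f a b) : ContinuousOn F (uIcc a b) :=
  hF.absolutelyContinuousOnInterval.continuousOn

theorem ae_hasDerivAt [CompleteSpace E] {F f : ℝ → E} (hF : IsPrimitiveOn F f a b) :
    ∀ᵐ x, x ∈ uIcc a b → HasDerivAt F (f x) x := by
  filter_upwards [hF.intervalIntegrable.ae_hasDerivAt_integral, volume.ae_ne a, volume.ae_ne b]
    with x hderiv hxa hxb hx
  have hnhds : uIcc a b ∈ 𝓝 x := by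
    refine Icc_mem_nhds (lt_of_le_of_ne hx.1 ?_) (lt_of_le_of_ne hx.2 ?_) <;> grind
  exact ((hderiv hx a left_mem_uIcc).const_add (F a)).congr_of_eventuallyEq
    (Filter.eventually_of_mem hnhds hF.eq_add_integral)

theorem of_ae_hasDerivAt [CompleteSpace E] {F f : ℝ → E}
    (hF : AbsolutelyContinuousOnInterval F a b) (hf : IntervalIntegrable f volume a b)
    (hderiv : ∀ᵐ x, x ∈ uIcc a b → HasDerivAt F (f x) x) : IsPrimitiveOn F f a b := by
  have hint := isPrimitiveOn_integral hf
  obtain ⟨C, hC⟩ : ∃ C, ∀ x ∈ uIcc a b, (F - fun x => ∫ t in a..x, f t) x = C := by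
    refine (hF.sub hint.absolutelyContinuousOnInterval).const_of_ae_hasDerivAt_zero ?_
    filter_upwards [hderiv, hint.ae_hasDerivAt] with x hxF hxint hx
    simpa only [sub_self] using (hxF hx).sub (hxint hx)
  refine ⟨hf, fun x hx => ?_⟩
  have hCa : F a = C := by simpa using hC a left_mem_uIcc
  rw [hCa, ← hC x hx, Pi.sub_apply, sub_add_cancel]

theorem mul {F f G g : ℝ → A} (hF : IsPrimitiveOn F f a b) (hG : IsPrimitiveOn G g a b) :
    IsPrimitiveOn (fun x => F x * G x) (fun x => f x * G x + F x * g x) a b := by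
  refine .of_ae_hasDerivAt
    (hF.absolutelyContinuousOnInterval.smul hG.absolutelyContinuousOnInterval)
    ((hF.intervalIntegrable.mul_continuousOn hG.continuousOn).add
      (hG.intervalIntegrable.continuousOn_mul hF.continuousOn)) ?_
  filter_upwards [hF.ae_hasDerivAt, hG.ae_hasDerivAt] with x hxF hxG hx
  exact (hxF hx).mul (hxG hx)

theorem clm_comp [CompleteSpace E] [CompleteSpace F] (L : E →L[ℝ] F) {G g : ℝ → E}
    (hG : IsPrimitiveOn G g a b) : IsPrimitiveOn (fun x => L (G x)) (fun x => L (g x)) a b := by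
  refine ⟨⟨L.integrable_comp hG.intervalIntegrable.1, L.integrable_comp hG.intervalIntegrable.2⟩,
    fun x hx => ?_⟩
  rw [L.intervalIntegral_comp_comm
    (hG.intervalIntegrable.mono_set (uIcc_subset_uIcc left_mem_uIcc hx)), ← map_add,
    ← hG.eq_add_integral x hx]

theorem norm_sq {𝕜 : Type*} [RCLike 𝕜] {F f : ℝ → 𝕜} (hF : IsPrimitiveOn F f a b) :
    IsPrimitiveOn (fun x => ‖F x‖ ^ 2) (fun x => 2 * RCLike.re (f x * starRingEnd 𝕜 (F x)))
      a b := by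
  have hmul := (hF.mul (hF.clm_comp (RCLike.conjCLE (K := 𝕜)).toContinuousLinearMap)).clm_comp
    RCLike.reCLM
  convert! hmul using 2 with x x
  · change _ = RCLike.re (F x * starRingEnd 𝕜 (F x))
    rw [RCLike.mul_conj, ← RCLike.ofReal_pow, RCLike.ofReal_re]
  · simp [RCLike.mul_re, two_mul, mul_comm]

end IsPrimitiveOn

end Primitives

section Inequalities

open Set

theorem norm_integral_le_sqrt_mul_sqrt {α E : Type*} [MeasurableSpace α] {μ : Measure α}
    [NormedAddCommGroup E] [NormedSpace ℝ E] {f : α → E} {A B : α → ℝ}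
    (hA : Integrable A μ) (hB : Integrable B μ) (hA0 : 0 ≤ᵐ[μ] A) (hB0 : 0 ≤ᵐ[μ] B)
    (hf : ∀ᵐ x ∂μ, ‖f x‖ ^ 2 ≤ A x * B x) :
    ‖∫ x, f x ∂μ‖ ≤ √(∫ x, A x ∂μ) * √(∫ x, B x ∂μ) := by
  have sq_sqrt_ae {C : α → ℝ} (hC0 : 0 ≤ᵐ[μ] C) : (fun x => √(C x) ^ 2) =ᵐ[μ] C :=
    hC0.mono fun x hx => Real.sq_sqrt hx
  have memLp_sqrt {C : α → ℝ} (hC : Integrable C μ) (hC0 : 0 ≤ᵐ[μ] C) :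
      MemLp (fun x => √(C x)) 2 μ :=
    (memLp_two_iff_integrable_sq (Real.continuous_sqrt.comp_aestronglyMeasurable hC.1)).2
      (hC.congr (sq_sqrt_ae hC0).symm)
  have hsA := memLp_sqrt hA hA0
  have hsB := memLp_sqrt hB hB0
  calc ‖∫ x, f x ∂μ‖ ≤ ∫ x, √(A x) * √(B x) ∂μ := by
        refine norm_integral_le_of_norm_le (hsA.integrable_mul hsB) ?_
        filter_upwards [hf, hA0] with x hx hxA
        exact (Real.le_sqrt_of_sq_le hx).trans_eq (Real.sqrt_mul hxA _)
    _ ≤ √(∫ x, √(A x) ^ 2 ∂μ) * √(∫ x, √(B x) ^ 2 ∂μ) := by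
        simpa [Real.sqrt_eq_rpow] using integral_mul_le_Lp_mul_Lq_of_nonneg
          Real.HolderConjugate.two_two (.of_forall fun x => Real.sqrt_nonneg (A x))
          (.of_forall fun x => Real.sqrt_nonneg (B x)) (by simpa using hsA) (by simpa using hsB)
    _ = √(∫ x, A x ∂μ) * √(∫ x, B x ∂μ) := by
        rw [integral_congr_ae (sq_sqrt_ae hA0), integral_congr_ae (sq_sqrt_ae hB0)]

theorem mul_integral_sub_le_integral_mul {α : Type*} [MeasurableSpace α] {μ : Measure α}
    {s : Set α} (hs : NullMeasurableSet s μ) {f ρ h : α → ℝ} {ε B : ℝ} (hε : 0 ≤ ε)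
    (hρ : Integrable ρ μ) (hρf : Integrable (fun x => ρ x * f x) μ)
    (hhf : Integrable (fun x => h x * f x) μ) (hρ0 : ∀ᵐ x ∂μ, 0 ≤ ρ x) (hh0 : ∀ᵐ x ∂μ, 0 ≤ h x)
    (hf0 : ∀ᵐ x ∂μ, 0 ≤ f x) (hfB : ∀ᵐ x ∂μ, f x ≤ B) (hhs : ∀ᵐ x ∂μ, x ∉ s → ε * ρ x ≤ h x) :
    ε * (∫ x, ρ x * f x ∂μ - B * ∫ x in s, ρ x ∂μ) ≤ ∫ x, h x * f x ∂μ := by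
  have hρs := hρ.indicator₀ hs
  rw [← integral_indicator₀ hs, ← integral_const_mul, ← integral_sub hρf (hρs.const_mul B),
    ← integral_const_mul]
  refine integral_mono_ae ((hρf.sub (hρs.const_mul B)).const_mul ε) hhf ?_
  filter_upwards [hρ0, hh0, hf0, hfB, hhs] with x hxρ hxh hxf hxB hxs
  by_cases hx : x ∈ s
  · rw [indicator_of_mem hx]
    have hle : ρ x * f x - B * ρ x ≤ 0 := by nlinarith
    exact (mul_nonpos_of_nonneg_of_nonpos hε hle).trans (mul_nonneg hxh hxf)
  · rw [indicator_of_notMem hx, mul_zero, sub_zero, ← mul_assoc]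
    exact mul_le_mul_of_nonneg_right (hxs hx) hxf

variable {E F H : Type*} [NormedAddCommGroup E] [NormedAddCommGroup F]
  [NormedAddCommGroup H] [NormedSpace ℝ H] {a b : ℝ} {ρ σ : ℝ → ℝ}

theorem intervalIntegrable_mul_norm_sq {f : ℝ → E} (hρ : IntervalIntegrable ρ volume a b)
    (hf : ContinuousOn f (uIcc a b)) :
    IntervalIntegrable (fun x => ρ x * ‖f x‖ ^ 2) volume a b :=
  hρ.mul_continuousOn (hf.norm.pow 2)

/-- The norm of `f` in `L²(a, b)` with weight `ρ`. -/
noncomputable def weightedNorm (ρ : ℝ → ℝ) (f : ℝ → E) (a b : ℝ) : ℝ :=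
  √(∫ t in a..b, ρ t * ‖f t‖ ^ 2)

theorem weightedNorm_nonneg (ρ : ℝ → ℝ) (f : ℝ → E) (a b : ℝ) : 0 ≤ weightedNorm ρ f a b :=
  Real.sqrt_nonneg _

theorem weightedNorm_sq (hab : a ≤ b) (hρ : ∀ᵐ x ∂volume.restrict (Icc a b), 0 ≤ ρ x)
    (f : ℝ → E) : weightedNorm ρ f a b ^ 2 = ∫ t in a..b, ρ t * ‖f t‖ ^ 2 :=
  Real.sq_sqrt <| intervalIntegral.integral_nonneg_of_ae_restrict hab <|
    hρ.mono fun _ hx => mul_nonneg hx (sq_nonneg _)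

theorem norm_integral_le_weightedNorm_mul_weightedNorm (hab : a ≤ b)
    (hρ : ∀ᵐ x ∂volume.restrict (Icc a b), 0 ≤ ρ x)
    (hσ : ∀ᵐ x ∂volume.restrict (Icc a b), 0 ≤ σ x) {f : ℝ → E} {g : ℝ → F} {k : ℝ → H}
    (hf : IntervalIntegrable (fun x => ρ x * ‖f x‖ ^ 2) volume a b)
    (hg : IntervalIntegrable (fun x => σ x * ‖g x‖ ^ 2) volume a b)
    (hk : ∀ᵐ x ∂volume.restrict (Icc a b),
      ‖k x‖ ^ 2 ≤ (ρ x * ‖f x‖ ^ 2) * (σ x * ‖g x‖ ^ 2)) :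
    ‖∫ x in a..b, k x‖ ≤ weightedNorm ρ f a b * weightedNorm σ g a b := by
  simp only [weightedNorm, intervalIntegral.integral_of_le hab]
  rw [← Measure.restrict_congr_set Ioc_ae_eq_Icc] at hρ hσ hk
  exact norm_integral_le_sqrt_mul_sqrt hf.1 hg.1
    (hρ.mono fun x hx => mul_nonneg hx (sq_nonneg _))
    (hσ.mono fun x hx => mul_nonneg hx (sq_nonneg _)) hk

/-- The supremum of `‖f‖` over `s`. As a supremum of reals it is only meaningful when `‖f‖` is
bounded on `s`. -/
noncomputable def supNormOn (f : ℝ → E) (s : Set ℝ) : ℝ :=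
  sSup ((fun x => ‖f x‖) '' s)

theorem supNormOn_nonneg (f : ℝ → E) (s : Set ℝ) : 0 ≤ supNormOn f s :=
  Real.sSup_nonneg (forall_mem_image.2 fun _ _ => norm_nonneg _)

theorem norm_le_supNormOn {f : ℝ → E} {s : Set ℝ} (hs : IsCompact s) (hf : ContinuousOn f s)
    {x : ℝ} (hx : x ∈ s) : ‖f x‖ ≤ supNormOn f s :=
  le_csSup (hs.bddAbove_image hf.norm) (mem_image_of_mem _ hx)

theorem exists_norm_eq_supNormOn {f : ℝ → E} {s : Set ℝ} (hs : IsCompact s) (hne : s.Nonempty)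
    (hf : ContinuousOn f s) : ∃ x ∈ s, ‖f x‖ = supNormOn f s :=
  (hs.image_of_continuousOn hf.norm).sSup_mem (hne.image _)

theorem neg_integral_mul_norm_sq_le {q : ℝ → ℝ} {φ : ℝ → E} (hab : a ≤ b)
    (hq : IntervalIntegrable q volume a b) (hφ : ContinuousOn φ (uIcc a b)) :
    -∫ x in a..b, q x * ‖φ x‖ ^ 2 ≤
      (∫ x in a..b, |min (q x) 0|) * supNormOn φ (Icc a b) ^ 2 := by
  have hmin : IntervalIntegrable (fun x => |min (q x) 0|) volume a b :=
    IntervalIntegrable.abs ⟨hq.1.inf (integrable_zero _ _ _), hq.2.inf (integrable_zero _ _ _)⟩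
  rw [← intervalIntegral.integral_neg, ← intervalIntegral.integral_mul_const]
  refine intervalIntegral.integral_mono_on hab (intervalIntegrable_mul_norm_sq hq hφ).neg
    (hmin.mul_const _) fun x hx => ?_
  have hqx : -q x ≤ |min (q x) 0| := (neg_le_neg (min_le_left _ _)).trans (neg_le_abs _)
  have hφx := norm_le_supNormOn isCompact_Icc (hφ.mono Icc_subset_uIcc) hx
  rw [← neg_mul]
  gcongr

end Inequalities

section ScalarBounds

variable {α β γ κ ε D N M G Q S K X : ℝ}

theorem le_sqrt_add_mul_of_sq_le (hα : 0 ≤ α) (hκ : 0 ≤ κ) (hN : 0 ≤ N)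
    (h : D ^ 2 ≤ α * (κ * N ^ 2 + 2 * (D * N))) : D ≤ (√(α * (κ + α)) + α) * N := by
  have hsq : (D - α * N) ^ 2 ≤ (√(α * (κ + α)) * N) ^ 2 := by
    rw [mul_pow, Real.sq_sqrt (by positivity)]
    linarith
  linarith [(abs_le_of_sq_le_sq' hsq (by positivity)).2]

theorem le_sqrt_mul_of_sq_le (hβκ : 0 ≤ 2 * β + κ) (hN : 0 ≤ N) (hD : D ≤ β * N)
    (h : M ^ 2 ≤ κ * N ^ 2 + 2 * (D * N)) : M ≤ √(2 * β + κ) * N := by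
  refine le_of_sq_le_sq ?_ (by positivity)
  rw [mul_pow, Real.sq_sqrt hβκ]
  nlinarith [mul_le_mul_of_nonneg_right hD hN]

theorem half_sq_le_sub_of_le_mul (hγ : 0 < γ) (hM0 : 0 ≤ M) (hM : M ≤ γ * N) :
    N ^ 2 / 2 ≤ N ^ 2 - M ^ 2 * (1 / (2 * γ ^ 2)) := by
  have hle : M ^ 2 * (1 / (2 * γ ^ 2)) ≤ (γ * N) ^ 2 * (1 / (2 * γ ^ 2)) := by gcongr
  have heq : (γ * N) ^ 2 * (1 / (2 * γ ^ 2)) = N ^ 2 / 2 := by field_simp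
  linarith

theorem le_two_div_mul_of_mul_le (hε : 0 < ε) (hN : 0 < N) (hD0 : 0 ≤ D) (hM0 : 0 ≤ M)
    (hG : 0 ≤ G) (hS : 0 ≤ S) (hQ : 0 ≤ Q) (hX : 0 ≤ X) (hK : ε * (N ^ 2 / 2) ≤ K)
    (hD : D ≤ β * N) (hM : M ≤ γ * N) (h : X * K ≤ M * (G * D) + S * (D ^ 2 + Q * M ^ 2)) :
    X ≤ 2 / ε * (β * γ * G + (β ^ 2 + γ ^ 2 * Q) * S) := by
  have hbound : X * (ε * (N ^ 2 / 2)) ≤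
      (β * γ * G + (β ^ 2 + γ ^ 2 * Q) * S) * N ^ 2 :=
    calc X * (ε * (N ^ 2 / 2)) ≤ X * K := by gcongr
      _ ≤ M * (G * D) + S * (D ^ 2 + Q * M ^ 2) := h
      _ ≤ γ * N * (G * (β * N)) + S * ((β * N) ^ 2 + Q * (γ * N) ^ 2) := by
        have hγN : 0 ≤ γ * N := hM0.trans hM
        gcongr
      _ = (β * γ * G + (β ^ 2 + γ ^ 2 * Q) * S) * N ^ 2 := by ring
  have hcancel : X * (ε / 2) ≤ β * γ * G + (β ^ 2 + γ ^ 2 * Q) * S :=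
    le_of_mul_le_mul_right (by linarith) (pow_pos hN 2)
  rw [div_mul_eq_mul_div, le_div_iff₀ hε]
  linarith

end ScalarBounds

section SupNormBound

open Set

variable {a b : ℝ}

theorem integral_pos_of_ae_pos {f : ℝ → ℝ} (hab : a < b) (hf : IntervalIntegrable f volume a b)
    (hf0 : ∀ᵐ x ∂volume.restrict (Icc a b), 0 < f x) : 0 < ∫ x in a..b, f x := by
  rw [← Measure.restrict_congr_set Ioc_ae_eq_Icc] at hf0
  have hne : volume.restrict (Ioc a b) ≠ 0 := by simp [hab]
  have := ae_neBot.2 hne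
  rw [intervalIntegral.integral_of_le hab.le]
  refine (integral_nonneg_of_ae (hf0.mono fun _ => le_of_lt)).lt_of_ne' fun hzero => ?_
  rw [integral_eq_zero_iff_of_nonneg_ae (hf0.mono fun _ => le_of_lt) hf.1] at hzero
  obtain ⟨x, hpos, hx⟩ := (hf0.and hzero).exists
  exact hpos.ne' hx

namespace IsPrimitiveOn

variable {𝕜 : Type*} [RCLike 𝕜] {F f : ℝ → 𝕜}

theorem norm_sq_le_norm_sq_add_integral (hF : IsPrimitiveOn F f a b) (hab : a ≤ b) {x y : ℝ}
    (hx : x ∈ Icc a b) (hy : y ∈ Icc a b) :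
    ‖F x‖ ^ 2 ≤ ‖F y‖ ^ 2 + 2 * ∫ t in a..b, ‖F t‖ * ‖f t‖ := by
  rw [← uIcc_of_le hab] at hx hy
  have hint := (hF.intervalIntegrable.norm.continuousOn_mul hF.continuousOn.norm).const_mul 2
  have hincr : ‖F x‖ ^ 2 - ‖F y‖ ^ 2 ≤ ∫ t in a..b, 2 * (‖F t‖ * ‖f t‖) := by
    rw [← hF.norm_sq.integral_eq_sub hy hx]
    calc _ ≤ ‖∫ t in y..x, 2 * RCLike.re (f t * starRingEnd 𝕜 (F t))‖ := le_abs_self _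
      _ ≤ |∫ t in y..x, 2 * (‖F t‖ * ‖f t‖)| := by
        refine intervalIntegral.norm_integral_le_abs_of_norm_le (.of_forall fun t => ?_)
          (hint.mono_set (uIcc_subset_uIcc hy hx))
        rw [norm_mul, Real.norm_two, mul_comm ‖F t‖, ← RCLike.norm_conj (F t), ← norm_mul]
        exact mul_le_mul_of_nonneg_left (RCLike.norm_re_le_norm _) zero_le_two
      _ ≤ |∫ t in a..b, 2 * (‖F t‖ * ‖f t‖)| :=
        intervalIntegral.abs_integral_mono_interval
          (uIoc_subset_uIoc_of_uIcc_subset_uIcc (uIcc_subset_uIcc hy hx))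
          (.of_forall fun t => by positivity) hint
      _ = ∫ t in a..b, 2 * (‖F t‖ * ‖f t‖) :=
        abs_of_nonneg (intervalIntegral.integral_nonneg hab fun t _ => by positivity)
  rw [intervalIntegral.integral_const_mul] at hincr
  linarith

theorem norm_sq_le_weighted_average (hF : IsPrimitiveOn F f a b) (hab : a ≤ b) {ρ : ℝ → ℝ}
    (hρ : IntervalIntegrable ρ volume a b) (hρ0 : ∀ᵐ x ∂volume.restrict (Icc a b), 0 ≤ ρ x)
    (hρ_pos : 0 < ∫ t in a..b, ρ t) {x : ℝ} (hx : x ∈ Icc a b) :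
    ‖F x‖ ^ 2 ≤ 1 / (∫ t in a..b, ρ t) * (∫ t in a..b, ρ t * ‖F t‖ ^ 2) +
      2 * ∫ t in a..b, ‖F t‖ * ‖f t‖ := by
  set J := 2 * ∫ t in a..b, ‖F t‖ * ‖f t‖
  have hint := intervalIntegrable_mul_norm_sq hρ hF.continuousOn
  have havg : (∫ t in a..b, ρ t) * (‖F x‖ ^ 2 - J) ≤ ∫ t in a..b, ρ t * ‖F t‖ ^ 2 := by
    rw [← intervalIntegral.integral_mul_const]
    refine intervalIntegral.integral_mono_ae_restrict hab (hρ.mul_const _) hint ?_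
    filter_upwards [hρ0, ae_restrict_mem measurableSet_Icc] with y hy hyI
    exact mul_le_mul_of_nonneg_left
      (sub_le_iff_le_add.2 (hF.norm_sq_le_norm_sq_add_integral hab hx hyI)) hy
  rw [one_div_mul_eq_div, ← sub_le_iff_le_add, le_div_iff₀' hρ_pos]
  exact havg

theorem sq_supNormOn_le {u : ℝ → 𝕜} {ρ : ℝ → ℝ} (hF : IsPrimitiveOn F f a b) (hab : a ≤ b)
    (hρ : IntervalIntegrable ρ volume a b) (hρ0 : ∀ᵐ x ∂volume.restrict (Icc a b), 0 ≤ ρ x)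
    (hρ_pos : 0 < ∫ t in a..b, ρ t) (hu : ContinuousOn u (uIcc a b))
    (hfu : ∀ᵐ x ∂volume.restrict (Icc a b), ‖f x‖ = ρ x * ‖u x‖) :
    supNormOn F (Icc a b) ^ 2 ≤ 1 / (∫ t in a..b, ρ t) * weightedNorm ρ F a b ^ 2 +
      2 * (weightedNorm ρ u a b * weightedNorm ρ F a b) := by
  obtain ⟨x, hx, hmax⟩ := exists_norm_eq_supNormOn isCompact_Icc (nonempty_Icc.2 hab)
    (hF.continuousOn.mono Icc_subset_uIcc)
  have hcs : ‖∫ t in a..b, ‖F t‖ * ‖f t‖‖ ≤ weightedNorm ρ u a b * weightedNorm ρ F a b := by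
    refine norm_integral_le_weightedNorm_mul_weightedNorm hab hρ0 hρ0
      (intervalIntegrable_mul_norm_sq hρ hu)
      (intervalIntegrable_mul_norm_sq hρ hF.continuousOn) (hfu.mono fun t ht => le_of_eq ?_)
    rw [ht, Real.norm_eq_abs, sq_abs]
    ring
  rw [← hmax, weightedNorm_sq hab hρ0]
  refine (hF.norm_sq_le_weighted_average hab hρ hρ0 hρ_pos hx).trans ?_
  gcongr
  exact (le_abs_self _).trans hcs

end IsPrimitiveOn

end SupNormBound

section MultiplierLowerBound

open Set

theorem setIntegral_le_of_withDensity_le {α : Type*} [MeasurableSpace α] {μ : Measure α}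
    {f : α → ℝ} {s : Set α} {δ : ℝ} (hδ : 0 ≤ δ) (hf : IntegrableOn f s μ)
    (hf0 : 0 ≤ᵐ[μ.restrict s] f)
    (hs : μ.withDensity (fun x => ENNReal.ofReal (f x)) s ≤ ENNReal.ofReal δ) :
    ∫ x in s, f x ∂μ ≤ δ := by
  rw [integral_eq_lintegral_of_nonneg_ae hf0 hf.1]
  exact ENNReal.toReal_le_of_le_ofReal hδ ((withDensity_apply_le _ s).trans hs)

theorem mul_weightedNorm_sq_sub_le_integral {E : Type*} [NormedAddCommGroup E] {a b : ℝ}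
    {p h : ℝ → ℝ} {φ : ℝ → E} {ε δ : ℝ} (hab : a ≤ b)
    (hp0 : ∀ᵐ x ∂volume.restrict (Icc a b), 0 < p x)
    (hp : IntervalIntegrable (fun x => 1 / p x) volume a b)
    (hh : IntervalIntegrable h volume a b) (hh0 : ∀ᵐ x ∂volume.restrict (Icc a b), 0 ≤ h x)
    (hφ : ContinuousOn φ (uIcc a b)) (hε : 0 ≤ ε) (hδ : 0 ≤ δ)
    (hs : (volume.withDensity fun x => ENNReal.ofReal (1 / p x))
      {x | x ∈ Icc a b ∧ p x * h x < ε} ≤ ENNReal.ofReal δ) :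
    ε * (weightedNorm (fun x => 1 / p x) φ a b ^ 2 - supNormOn φ (Icc a b) ^ 2 * δ) ≤
      ∫ x in a..b, h x * ‖φ x‖ ^ 2 := by
  set s := {x | x ∈ Icc a b ∧ p x * h x < ε}
  have hρ0 : ∀ᵐ x ∂volume.restrict (Icc a b), 0 ≤ 1 / p x :=
    hp0.mono fun x hx => (one_div_pos.2 hx).le
  have integrable_Icc {f : ℝ → ℝ} (hf : IntervalIntegrable f volume a b) :
      IntegrableOn f (Icc a b) :=
    (intervalIntegrable_iff_integrableOn_Icc_of_le hab).1 hf
  have hp_meas : AEMeasurable p (volume.restrict (Icc a b)) := by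
    simpa only [one_div, Pi.inv_def, inv_inv] using (integrable_Icc hp).aemeasurable.inv
  have hs_meas : NullMeasurableSet s (volume.restrict (Icc a b)) :=
    measurableSet_Icc.nullMeasurableSet.inter <|
      nullMeasurableSet_lt (hp_meas.mul (integrable_Icc hh).aemeasurable) aemeasurable_const
  have hs_integral : ∫ x in s, 1 / p x ∂volume.restrict (Icc a b) ≤ δ := by
    have hsub : s ⊆ Icc a b := fun x hx => hx.1
    rw [Measure.restrict_restrict₀ hs_meas, inter_eq_left.2 hsub]
    exact setIntegral_le_of_withDensity_le hδ ((integrable_Icc hp).mono_set hsub)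
      (ae_restrict_of_ae_restrict_of_subset hsub hρ0) hs
  have hchebyshev := mul_integral_sub_le_integral_mul hs_meas
    (B := supNormOn φ (Icc a b) ^ 2) hε (integrable_Icc hp)
    (integrable_Icc (intervalIntegrable_mul_norm_sq hp hφ))
    (integrable_Icc (intervalIntegrable_mul_norm_sq hh hφ)) hρ0 hh0
    (.of_forall fun x => sq_nonneg ‖φ x‖) ?_ ?_
  · rw [weightedNorm_sq hab hρ0]
    simp only [intervalIntegral.integral_of_le hab, ← integral_Icc_eq_integral_Ioc]
    refine le_trans ?_ hchebyshev
    gcongr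
  · filter_upwards [ae_restrict_mem measurableSet_Icc] with x hx
    gcongr
    exact norm_le_supNormOn isCompact_Icc (hφ.mono Icc_subset_uIcc) hx
  · filter_upwards [hp0, ae_restrict_mem measurableSet_Icc] with x hxp hx hxs
    rw [mul_one_div, div_le_iff₀' hxp]
    exact not_lt.1 fun hlt => hxs ⟨hx, hlt⟩

end MultiplierLowerBound

section SturmLiouville

open Set ComplexConjugate

variable {a b : ℝ} {p q w : ℝ → ℝ} {lam : ℂ} {φ u : ℝ → ℂ}

/-- `φ` solves `-(p φ')' + q φ = lam w φ` on the interval with endpoints `a` and `b`, where `u` is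
the quasi-derivative `p φ'`. -/
structure IsSturmLiouvilleSolution (p q w : ℝ → ℝ) (lam : ℂ) (φ u : ℝ → ℂ) (a b : ℝ) : Prop where
  primitive : IsPrimitiveOn φ (fun t => u t / p t) a b
  quasiDeriv_primitive : IsPrimitiveOn u (fun t => (q t - lam * w t) * φ t) a b

/-- The boundary term `[u · conj φ]` which arises when the Sturm–Liouville equation is multiplied
by `conj φ` and integrated by parts. -/
def boundaryForm (φ u : ℝ → ℂ) (a b : ℝ) : ℂ :=
  u b * conj (φ b) - u a * conj (φ a)

/-- The density `p |φ'|² + q |φ|²` of the form associated with the Sturm–Liouville expression,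
written in terms of the quasi-derivative `u = p φ'`. -/
noncomputable def energyDensity (p q : ℝ → ℝ) (φ u : ℝ → ℂ) (x : ℝ) : ℝ :=
  1 / p x * ‖u x‖ ^ 2 + q x * ‖φ x‖ ^ 2

theorem intervalIntegrable_ofReal {f : ℝ → ℝ} (hf : IntervalIntegrable f volume a b) :
    IntervalIntegrable (fun x => (f x : ℂ)) volume a b :=
  ⟨hf.1.ofReal, hf.2.ofReal⟩

theorem integral_ofReal_sub_mul_ofReal {f k : ℝ → ℝ} (hf : IntervalIntegrable f volume a b)
    (hk : IntervalIntegrable k volume a b) (z : ℂ) :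
    ∫ x in a..b, ((f x : ℂ) - z * k x) = (∫ x in a..b, f x : ℝ) - z * (∫ x in a..b, k x : ℝ) := by
  rw [intervalIntegral.integral_sub (intervalIntegrable_ofReal hf)
    ((intervalIntegrable_ofReal hk).const_mul z), intervalIntegral.integral_const_mul,
    intervalIntegral.integral_ofReal, intervalIntegral.integral_ofReal]

theorem intervalIntegrable_energyDensity
    (hp : IntervalIntegrable (fun x => 1 / p x) volume a b) (hq : IntervalIntegrable q volume a b)
    (hφ : ContinuousOn φ (uIcc a b)) (hu : ContinuousOn u (uIcc a b)) :
    IntervalIntegrable (energyDensity p q φ u) volume a b :=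
  (intervalIntegrable_mul_norm_sq hp hu).add (intervalIntegrable_mul_norm_sq hq hφ)

theorem integral_energyDensity (hab : a ≤ b)
    (hp0 : ∀ᵐ x ∂volume.restrict (Icc a b), 0 < p x)
    (hp : IntervalIntegrable (fun x => 1 / p x) volume a b) (hq : IntervalIntegrable q volume a b)
    (hφ : ContinuousOn φ (uIcc a b)) (hu : ContinuousOn u (uIcc a b)) :
    ∫ x in a..b, energyDensity p q φ u x =
      weightedNorm (fun x => 1 / p x) u a b ^ 2 + ∫ x in a..b, q x * ‖φ x‖ ^ 2 := by
  rw [weightedNorm_sq hab (hp0.mono fun x hx => (one_div_pos.2 hx).le)]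
  exact intervalIntegral.integral_add (intervalIntegrable_mul_norm_sq hp hu)
    (intervalIntegrable_mul_norm_sq hq hφ)

namespace IsSturmLiouvilleSolution

theorem of_integral_eq (hab : a ≤ b) (hp : IntervalIntegrable (fun x => 1 / p x) volume a b)
    (hq : IntervalIntegrable q volume a b) (hw : IntervalIntegrable w volume a b)
    (hφ : ContinuousOn φ (Icc a b)) (hu : ContinuousOn u (Icc a b))
    (hφ_eq : ∀ x ∈ Icc a b, φ x = φ a + ∫ t in a..x, u t / p t)
    (hu_eq : ∀ x ∈ Icc a b, u x = u a + ∫ t in a..x, (q t - lam * w t) * φ t) :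
    IsSturmLiouvilleSolution p q w lam φ u a b := by
  rw [← uIcc_of_le hab] at hφ hu hφ_eq hu_eq
  refine ⟨⟨?_, hφ_eq⟩, ?_, hu_eq⟩
  · simpa only [ofReal_div, ofReal_one, mul_one_div] using
      (intervalIntegrable_ofReal hp).continuousOn_mul hu
  · exact ((intervalIntegrable_ofReal hq).sub
      ((intervalIntegrable_ofReal hw).const_mul lam)).mul_continuousOn hφ

theorem continuousOn (h : IsSturmLiouvilleSolution p q w lam φ u a b) :
    ContinuousOn φ (uIcc a b) :=
  h.primitive.continuousOn

theorem continuousOn_quasiDeriv (h : IsSturmLiouvilleSolution p q w lam φ u a b) :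
    ContinuousOn u (uIcc a b) :=
  h.quasiDeriv_primitive.continuousOn

theorem isPrimitiveOn_quasiDeriv_mul_conj (h : IsSturmLiouvilleSolution p q w lam φ u a b) :
    IsPrimitiveOn (fun x => u x * conj (φ x))
      (fun x => (energyDensity p q φ u x : ℂ) - lam * ((w x * ‖φ x‖ ^ 2 : ℝ) : ℂ)) a b := by
  convert! h.quasiDeriv_primitive.mul
    (h.primitive.clm_comp (RCLike.conjCLE (K := ℂ)).toContinuousLinearMap) using 1
  funext x
  change _ = (q x - lam * w x) * φ x * conj (φ x) + u x * conj (u x / p x)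
  rw [map_div₀, conj_ofReal, mul_assoc, mul_conj', ← mul_div_assoc, mul_conj', energyDensity]
  push_cast
  ring

theorem boundaryForm_eq (h : IsSturmLiouvilleSolution p q w lam φ u a b)
    (hp : IntervalIntegrable (fun x => 1 / p x) volume a b)
    (hq : IntervalIntegrable q volume a b) (hw : IntervalIntegrable w volume a b) :
    boundaryForm φ u a b = (∫ x in a..b, energyDensity p q φ u x : ℝ) -
      lam * (∫ x in a..b, w x * ‖φ x‖ ^ 2 : ℝ) := by
  rw [← integral_ofReal_sub_mul_ofReal
    (intervalIntegrable_energyDensity hp hq h.continuousOn h.continuousOn_quasiDeriv)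
    (intervalIntegrable_mul_norm_sq hw h.continuousOn) lam]
  exact (h.isPrimitiveOn_quasiDeriv_mul_conj.integral_eq_sub left_mem_uIcc right_mem_uIcc).symm

theorem re_boundaryForm_eq (h : IsSturmLiouvilleSolution p q w lam φ u a b)
    (hp : IntervalIntegrable (fun x => 1 / p x) volume a b)
    (hq : IntervalIntegrable q volume a b) (hw : IntervalIntegrable w volume a b)
    (hlam : lam.im ≠ 0) (him : (boundaryForm φ u a b).im = 0) :
    (boundaryForm φ u a b).re = ∫ x in a..b, energyDensity p q φ u x := by
  have hform := h.boundaryForm_eq hp hq hw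
  have hweight : ∫ x in a..b, w x * ‖φ x‖ ^ 2 = 0 := by
    have := congrArg im hform
    rw [him, sub_im, im_mul_ofReal, ofReal_im, zero_sub, zero_eq_neg] at this
    exact (mul_eq_zero.1 this).resolve_left hlam
  rw [hform, hweight, ofReal_zero, mul_zero, sub_zero, ofReal_re]

theorem sq_weightedNorm_quasiDeriv_le (h : IsSturmLiouvilleSolution p q w lam φ u a b)
    (hab : a ≤ b) (hp0 : ∀ᵐ x ∂volume.restrict (Icc a b), 0 < p x)
    (hp : IntervalIntegrable (fun x => 1 / p x) volume a b)
    (hq : IntervalIntegrable q volume a b) (hw : IntervalIntegrable w volume a b)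
    (hlam : lam.im ≠ 0) (him : (boundaryForm φ u a b).im = 0) {c : ℝ}
    (hre : (boundaryForm φ u a b).re ≤ c * supNormOn φ (Icc a b) ^ 2) :
    weightedNorm (fun x => 1 / p x) u a b ^ 2 ≤
      (c + ∫ x in a..b, |min (q x) 0|) * supNormOn φ (Icc a b) ^ 2 := by
  have henergy := h.re_boundaryForm_eq hp hq hw hlam him
  rw [integral_energyDensity hab hp0 hp hq h.continuousOn h.continuousOn_quasiDeriv] at henergy
  linarith [neg_integral_mul_norm_sq_le hab hq h.continuousOn]

theorem mul_integral_eq (h : IsSturmLiouvilleSolution p q w lam φ u a b)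
    (hp : IntervalIntegrable (fun x => 1 / p x) volume a b)
    (hq : IntervalIntegrable q volume a b) (hw : IntervalIntegrable w volume a b) {g g' : ℝ → ℝ}
    (hg : IsPrimitiveOn g g' a b) (hga : g a = 0) (hgb : g b = 0) :
    lam * (∫ x in a..b, g x * w x * ‖φ x‖ ^ 2 : ℝ) =
      (∫ x in a..b, (g' x : ℂ) * (u x * conj (φ x))) +
        (∫ x in a..b, g x * energyDensity p q φ u x : ℝ) := by
  have hprod := (hg.clm_comp ofRealCLM).mul h.isPrimitiveOn_quasiDeriv_mul_conj
  have hint := hprod.integral_eq_sub left_mem_uIcc right_mem_uIcc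
  simp only [ofRealCLM_apply, hga, hgb, ofReal_zero, zero_mul, sub_zero] at hint
  have hdensity : ∀ x, (g x : ℂ) *
      (energyDensity p q φ u x - lam * ((w x * ‖φ x‖ ^ 2 : ℝ) : ℂ)) =
        ((g x * energyDensity p q φ u x : ℝ) : ℂ) - lam * ((g x * w x * ‖φ x‖ ^ 2 : ℝ) : ℂ) := by
    intro x
    push_cast
    ring
  have henergy := (intervalIntegrable_energyDensity hp hq h.continuousOn
    h.continuousOn_quasiDeriv).continuousOn_mul hg.continuousOn
  have hweight := intervalIntegrable_mul_norm_sq (hw.continuousOn_mul hg.continuousOn)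
    h.continuousOn
  simp only [hdensity] at hint
  rw [intervalIntegral.integral_add
    ((intervalIntegrable_ofReal hg.intervalIntegrable).mul_continuousOn
      h.isPrimitiveOn_quasiDeriv_mul_conj.continuousOn)
    ((intervalIntegrable_ofReal henergy).sub ((intervalIntegrable_ofReal hweight).const_mul lam)),
    integral_ofReal_sub_mul_ofReal henergy hweight] at hint
  linear_combination -hint

end IsSturmLiouvilleSolution

theorem norm_integral_mul_mul_conj_le (hab : a ≤ b)
    (hp0 : ∀ᵐ x ∂volume.restrict (Icc a b), 0 < p x)
    (hp : IntervalIntegrable (fun x => 1 / p x) volume a b) (hφ : ContinuousOn φ (uIcc a b))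
    (hu : ContinuousOn u (uIcc a b)) {f : ℝ → ℝ} (hf : IntervalIntegrable f volume a b)
    (hpf : IntervalIntegrable (fun x => p x * ‖f x‖ ^ 2) volume a b) :
    ‖∫ x in a..b, (f x : ℂ) * (u x * conj (φ x))‖ ≤ supNormOn φ (Icc a b) *
      (weightedNorm p f a b * weightedNorm (fun x => 1 / p x) u a b) := by
  have hcs : ‖∫ x in a..b, ‖f x‖ * ‖u x‖‖ ≤
      weightedNorm p f a b * weightedNorm (fun x => 1 / p x) u a b := by
    refine norm_integral_le_weightedNorm_mul_weightedNorm hab (hp0.mono fun _ hx => hx.le)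
      (hp0.mono fun x hx => (one_div_pos.2 hx).le) hpf (intervalIntegrable_mul_norm_sq hp hu)
      (hp0.mono fun x hx => le_of_eq ?_)
    rw [norm_mul, norm_norm, norm_norm]
    field_simp
  calc ‖∫ x in a..b, (f x : ℂ) * (u x * conj (φ x))‖
      ≤ ∫ x in a..b, supNormOn φ (Icc a b) * (‖f x‖ * ‖u x‖) := by
        refine intervalIntegral.norm_integral_le_of_norm_le hab (.of_forall fun x hx => ?_)
          ((hf.norm.mul_continuousOn hu.norm).const_mul _)
        have hφx := norm_le_supNormOn isCompact_Icc (hφ.mono Icc_subset_uIcc)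
          (Ioc_subset_Icc_self hx)
        rw [norm_mul, norm_mul, RCLike.norm_conj, norm_real, ← mul_assoc, mul_comm]
        gcongr
    _ ≤ _ := by
        rw [intervalIntegral.integral_const_mul]
        exact mul_le_mul_of_nonneg_left ((le_abs_self _).trans hcs) (supNormOn_nonneg _ _)

theorem abs_integral_mul_energyDensity_le (hab : a ≤ b)
    (hp0 : ∀ᵐ x ∂volume.restrict (Icc a b), 0 < p x)
    (hp : IntervalIntegrable (fun x => 1 / p x) volume a b)
    (hq : IntervalIntegrable q volume a b) (hφ : ContinuousOn φ (uIcc a b))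
    (hu : ContinuousOn u (uIcc a b)) {g : ℝ → ℝ} (hg : ContinuousOn g (uIcc a b)) :
    |∫ x in a..b, g x * energyDensity p q φ u x| ≤ supNormOn g (Icc a b) *
      (weightedNorm (fun x => 1 / p x) u a b ^ 2 +
        (∫ x in a..b, |q x|) * supNormOn φ (Icc a b) ^ 2) := by
  have hu2 := intervalIntegrable_mul_norm_sq hp hu
  have hqM := hq.abs.mul_const (supNormOn φ (Icc a b) ^ 2)
  rw [weightedNorm_sq hab (hp0.mono fun x hx => (one_div_pos.2 hx).le),
    ← intervalIntegral.integral_mul_const, ← intervalIntegral.integral_add hu2 hqM,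
    ← intervalIntegral.integral_const_mul, ← Real.norm_eq_abs]
  refine intervalIntegral.norm_integral_le_of_norm_le hab ?_ ((hu2.add hqM).const_mul _)
  rw [← ae_restrict_iff' measurableSet_Ioc, Measure.restrict_congr_set Ioc_ae_eq_Icc]
  filter_upwards [hp0, ae_restrict_mem measurableSet_Icc] with x hxp hx
  have hgx := norm_le_supNormOn isCompact_Icc (hg.mono Icc_subset_uIcc) hx
  have hφx := norm_le_supNormOn isCompact_Icc (hφ.mono Icc_subset_uIcc) hx
  rw [norm_mul]
  refine mul_le_mul hgx ?_ (norm_nonneg _) (supNormOn_nonneg _ _)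
  refine (abs_add_le _ _).trans ?_
  rw [abs_of_nonneg (by positivity : 0 ≤ 1 / p x * ‖u x‖ ^ 2), abs_mul,
    abs_of_nonneg (sq_nonneg ‖φ x‖)]
  gcongr

namespace IsSturmLiouvilleSolution

theorem abs_im_mul_integral_le (h : IsSturmLiouvilleSolution p q w lam φ u a b) (hab : a ≤ b)
    (hp0 : ∀ᵐ x ∂volume.restrict (Icc a b), 0 < p x)
    (hp : IntervalIntegrable (fun x => 1 / p x) volume a b)
    (hq : IntervalIntegrable q volume a b) (hw : IntervalIntegrable w volume a b) {g g' : ℝ → ℝ}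
    (hg : IsPrimitiveOn g g' a b) (hga : g a = 0) (hgb : g b = 0)
    (hg' : IntervalIntegrable (fun x => p x * ‖g' x‖ ^ 2) volume a b) :
    |lam.im| * (∫ x in a..b, g x * w x * ‖φ x‖ ^ 2) ≤ supNormOn φ (Icc a b) *
      (weightedNorm p g' a b * weightedNorm (fun x => 1 / p x) u a b) := by
  have him := congrArg im (h.mul_integral_eq hp hq hw hg hga hgb)
  rw [im_mul_ofReal, add_im, ofReal_im, add_zero] at him
  calc _ ≤ |lam.im * ∫ x in a..b, g x * w x * ‖φ x‖ ^ 2| := by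
        rw [abs_mul]
        exact mul_le_mul_of_nonneg_left (le_abs_self _) (abs_nonneg _)
    _ ≤ ‖∫ x in a..b, (g' x : ℂ) * (u x * conj (φ x))‖ := him ▸ abs_im_le_norm _
    _ ≤ _ := norm_integral_mul_mul_conj_le hab hp0 hp h.continuousOn h.continuousOn_quasiDeriv
        hg.intervalIntegrable hg'

theorem abs_re_mul_integral_le (h : IsSturmLiouvilleSolution p q w lam φ u a b) (hab : a ≤ b)
    (hp0 : ∀ᵐ x ∂volume.restrict (Icc a b), 0 < p x)
    (hp : IntervalIntegrable (fun x => 1 / p x) volume a b)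
    (hq : IntervalIntegrable q volume a b) (hw : IntervalIntegrable w volume a b) {g g' : ℝ → ℝ}
    (hg : IsPrimitiveOn g g' a b) (hga : g a = 0) (hgb : g b = 0)
    (hg' : IntervalIntegrable (fun x => p x * ‖g' x‖ ^ 2) volume a b) :
    |lam.re| * (∫ x in a..b, g x * w x * ‖φ x‖ ^ 2) ≤ supNormOn φ (Icc a b) *
      (weightedNorm p g' a b * weightedNorm (fun x => 1 / p x) u a b) + supNormOn g (Icc a b) *
        (weightedNorm (fun x => 1 / p x) u a b ^ 2 +
          (∫ x in a..b, |q x|) * supNormOn φ (Icc a b) ^ 2) := by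
  have hre := congrArg re (h.mul_integral_eq hp hq hw hg hga hgb)
  rw [re_mul_ofReal, add_re, ofReal_re] at hre
  calc _ ≤ |lam.re * ∫ x in a..b, g x * w x * ‖φ x‖ ^ 2| := by
        rw [abs_mul]
        exact mul_le_mul_of_nonneg_left (le_abs_self _) (abs_nonneg _)
    _ ≤ ‖∫ x in a..b, (g' x : ℂ) * (u x * conj (φ x))‖ +
          |∫ x in a..b, g x * energyDensity p q φ u x| :=
        hre ▸ (abs_add_le _ _).trans (add_le_add_left (abs_re_le_norm _) _)
    _ ≤ _ := add_le_add
        (norm_integral_mul_mul_conj_le hab hp0 hp h.continuousOn h.continuousOn_quasiDeriv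
          hg.intervalIntegrable hg')
        (abs_integral_mul_energyDensity_le hab hp0 hp hq h.continuousOn h.continuousOn_quasiDeriv
          hg.continuousOn)

theorem weightedNorm_quasiDeriv_le_and_supNormOn_le
    (h : IsSturmLiouvilleSolution p q w lam φ u a b) (hab : a < b)
    (hp0 : ∀ᵐ x ∂volume.restrict (Icc a b), 0 < p x)
    (hp : IntervalIntegrable (fun x => 1 / p x) volume a b) {α β : ℝ} (hα0 : 0 ≤ α)
    (hα : weightedNorm (fun x => 1 / p x) u a b ^ 2 ≤ α * supNormOn φ (Icc a b) ^ 2)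
    (hβ : β = √(α * (1 / (∫ x in a..b, 1 / p x) + α)) + α) :
    weightedNorm (fun x => 1 / p x) u a b ≤ β * weightedNorm (fun x => 1 / p x) φ a b ∧
      supNormOn φ (Icc a b) ≤ √(2 * β + 1 / (∫ x in a..b, 1 / p x)) *
        weightedNorm (fun x => 1 / p x) φ a b := by
  have hρ0 : ∀ᵐ x ∂volume.restrict (Icc a b), 0 < 1 / p x :=
    hp0.mono fun x hx => one_div_pos.2 hx
  have hI := integral_pos_of_ae_pos hab hp hρ0
  have hN := weightedNorm_nonneg (fun x => 1 / p x) φ a b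
  have hβ0 : 0 ≤ β := hβ ▸ by positivity
  have hsup := h.primitive.sq_supNormOn_le hab.le hp (hρ0.mono fun _ => le_of_lt) hI
    h.continuousOn_quasiDeriv <| hp0.mono fun x hx => by
      rw [norm_div, norm_real, Real.norm_of_nonneg hx.le, one_div_mul_eq_div]
  have hD := le_sqrt_add_mul_of_sq_le hα0 (one_div_pos.2 hI).le hN
    (hα.trans (mul_le_mul_of_nonneg_left hsup hα0))
  rw [← hβ] at hD
  exact ⟨hD, le_sqrt_mul_of_sq_le (by positivity) hN hD hsup⟩

end IsSturmLiouvilleSolution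

theorem boundaryForm_of_separated {l r : ℝ} (hua : u a = l * φ a) (hub : u b = r * φ b) :
    boundaryForm φ u a b = (r * ‖φ b‖ ^ 2 - l * ‖φ a‖ ^ 2 : ℝ) := by
  rw [boundaryForm, hua, hub, mul_assoc, mul_assoc, mul_conj', mul_conj']
  push_cast
  rfl

theorem re_boundaryForm_le_of_separated {l r : ℝ} (hab : a ≤ b) (hφ : ContinuousOn φ (Icc a b))
    (hua : u a = l * φ a) (hub : u b = r * φ b) :
    (boundaryForm φ u a b).re ≤ (|l| + |r|) * supNormOn φ (Icc a b) ^ 2 := by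
  have sq_le {x : ℝ} (hx : x ∈ Icc a b) : ‖φ x‖ ^ 2 ≤ supNormOn φ (Icc a b) ^ 2 := by
    gcongr
    exact norm_le_supNormOn isCompact_Icc hφ hx
  rw [boundaryForm_of_separated hua hub, ofReal_re, sub_eq_neg_add, ← neg_mul, add_mul]
  exact add_le_add
    (mul_le_mul (neg_le_abs l) (sq_le (left_mem_Icc.2 hab)) (sq_nonneg _) (abs_nonneg l))
    (mul_le_mul (le_abs_self r) (sq_le (right_mem_Icc.2 hab)) (sq_nonneg _) (abs_nonneg r))

theorem nonreal_eigenvalue_bounds_separated_general (hab : a < b)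
    (hp0 : ∀ᵐ x ∂volume.restrict (Icc a b), 0 < p x)
    (hp : IntervalIntegrable (fun x => 1 / p x) volume a b)
    (hq : IntervalIntegrable q volume a b) (hw : IntervalIntegrable w volume a b)
    {c α β γ : ℝ} (hα : α = c + ∫ x in a..b, |min (q x) 0|)
    (hβ : β = √(α * (1 / (∫ x in a..b, 1 / p x) + α)) + α)
    (hγ : γ = √(2 * β + 1 / (∫ x in a..b, 1 / p x)))
    {g g' : ℝ → ℝ} (hg : IsPrimitiveOn g g' a b) (hga : g a = 0) (hgb : g b = 0)
    (hg' : IntervalIntegrable (fun x => p x * ‖g' x‖ ^ 2) volume a b)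
    (hgw : ∀ᵐ x ∂volume.restrict (Icc a b), 0 ≤ g x * w x) {ε : ℝ} (hε : 0 < ε)
    (hεγ : (volume.withDensity fun x => ENNReal.ofReal (1 / p x))
      {x | x ∈ Icc a b ∧ p x * (g x * w x) < ε} ≤ ENNReal.ofReal (1 / (2 * γ ^ 2)))
    (h : IsSturmLiouvilleSolution p q w lam φ u a b) (hlam : lam.im ≠ 0)
    (hφ : ∃ x ∈ Icc a b, φ x ≠ 0) (him : (boundaryForm φ u a b).im = 0)
    (hre : (boundaryForm φ u a b).re ≤ c * supNormOn φ (Icc a b) ^ 2) :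
    |lam.im| ≤ 2 / ε * (β * γ * weightedNorm p g' a b) ∧
      |lam.re| ≤ 2 / ε * (β * γ * weightedNorm p g' a b +
        (β ^ 2 + γ ^ 2 * ∫ x in a..b, |q x|) * supNormOn g (Icc a b)) := by
  have hM : 0 < supNormOn φ (Icc a b) := by
    obtain ⟨x, hx, hne⟩ := hφ
    exact (norm_pos_iff.2 hne).trans_le
      (norm_le_supNormOn isCompact_Icc (h.continuousOn.mono Icc_subset_uIcc) hx)
  have hD2 := h.sq_weightedNorm_quasiDeriv_le hab.le hp0 hp hq hw hlam him hre
  rw [← hα] at hD2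
  have hα0 : 0 ≤ α := nonneg_of_mul_nonneg_left ((sq_nonneg _).trans hD2) (pow_pos hM 2)
  obtain ⟨hDN, hMN⟩ := h.weightedNorm_quasiDeriv_le_and_supNormOn_le hab hp0 hp hα0 hD2 hβ
  rw [← hγ] at hMN
  have hN := pos_of_mul_pos_right (hM.trans_le hMN) (hγ ▸ Real.sqrt_nonneg _)
  have hγ0 := pos_of_mul_pos_left (hM.trans_le hMN) hN.le
  have hK := (mul_le_mul_of_nonneg_left (half_sq_le_sub_of_le_mul hγ0 hM.le hMN) hε.le).trans
    (mul_weightedNorm_sq_sub_le_integral hab.le hp0 hp (hw.continuousOn_mul hg.continuousOn) hgw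
      h.continuousOn hε.le (by positivity) hεγ)
  have hQ : 0 ≤ ∫ x in a..b, |q x| :=
    intervalIntegral.integral_nonneg hab.le fun x _ => abs_nonneg (q x)
  have bound {X S : ℝ} (hS : 0 ≤ S) (hX : 0 ≤ X) :=
    le_two_div_mul_of_mul_le hε hN (weightedNorm_nonneg _ u a b) hM.le
      (weightedNorm_nonneg p g' a b) hS hQ hX hK hDN hMN
  -- The imaginary part of the multiplier identity has no energy term, hence takes `S = 0`.
  refine ⟨?_, bound (supNormOn_nonneg _ _) (abs_nonneg _)
    (h.abs_re_mul_integral_le hab.le hp0 hp hq hw hg hga hgb hg')⟩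
  simpa only [mul_zero, add_zero] using bound le_rfl (abs_nonneg _)
    (by simpa only [zero_mul, add_zero] using
      h.abs_im_mul_integral_le hab.le hp0 hp hq hw hg hga hgb hg')

end SturmLiouville

/-- Theorem 3.2 of the paper for separated self-adjoint boundary conditions:
bounds on the real and imaginary parts of non-real eigenvalues of the
indefinite Sturm–Liouville problem. -/
theorem nonreal_eigenvalue_bounds_separated
    (a b : ℝ) (hab : a < b) (p q w : ℝ → ℝ)
    (hpm : Measurable p) (hqm : Measurable q) (hwm : Measurable w)
    (hp_pos : ∀ᵐ x ∂(volume.restrict (Set.Ioc a b)), 0 < p x)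
    (hp_int : IntegrableOn (fun x => 1 / p x) (Set.Ioc a b))
    (hq_int : IntegrableOn q (Set.Ioc a b))
    (hw_int : IntegrableOn w (Set.Ioc a b))
    (hw_ne : ∀ᵐ x ∂(volume.restrict (Set.Ioc a b)), w x ≠ 0)
    (hw_pos : 0 < volume {x ∈ Set.Ioc a b | 0 < w x})
    (hw_neg : 0 < volume {x ∈ Set.Ioc a b | w x < 0})
    (l r : ℝ) (c α β γ : ℝ)
    (hc : c = |l| + |r|)
    (hα : α = c + ∫ t in a..b, |min (q t) 0|)
    (hβ : β = Real.sqrt (α * (1 / (∫ t in a..b, 1 / p t) + α)) + α)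
    (hγ : γ = Real.sqrt (2 * β + 1 / (∫ t in a..b, 1 / p t)))
    -- the comparison function g, absolutely continuous with a.e. derivative g'
    (g g' : ℝ → ℝ) (hg'm : Measurable g')
    (hg'int : IntegrableOn g' (Set.Icc a b))
    (hgAC : ∀ x ∈ Set.Icc a b, g x = g a + ∫ t in a..x, g' t)
    (hga : g a = 0) (hgb : g b = 0)
    (hg'2 : IntegrableOn (fun t => p t * g' t ^ 2) (Set.Ioc a b))
    (hgw : ∀ᵐ x ∂(volume.restrict (Set.Ioc a b)), 0 < g x * w x)
    (ε : ℝ) (hε : 0 < ε)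
    (hεcond : (volume.withDensity fun x => ENNReal.ofReal (1 / p x))
        {x | x ∈ Set.Icc a b ∧ p x * g x * w x < ε} ≤ ENNReal.ofReal (1 / (2 * γ ^ 2))) :
    ∀ lam : ℂ, lam.im ≠ 0 →
      ∀ φ u : ℝ → ℂ,
        ContinuousOn φ (Set.Icc a b) → ContinuousOn u (Set.Icc a b) →
        (∀ x ∈ Set.Icc a b, φ x = φ a + ∫ t in a..x, u t / (p t : ℂ)) →
        (∀ x ∈ Set.Icc a b,
            u x = u a + ∫ t in a..x, ((q t : ℂ) - lam * (w t : ℂ)) * φ t) →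
        (∃ x ∈ Set.Icc a b, φ x ≠ 0) →
        u a = (l : ℂ) * φ a → u b = (r : ℂ) * φ b →
        |lam.im| ≤ 2 / ε * β * γ * Real.sqrt (∫ t in a..b, p t * g' t ^ 2)
          ∧ |lam.re| ≤ 2 / ε *
              (β * γ * Real.sqrt (∫ t in a..b, p t * g' t ^ 2)
                + (β ^ 2 + γ ^ 2 * ∫ t in a..b, |q t|)
                    * sSup ((fun x => |g x|) '' Set.Icc a b)) := by
  intro lam hlam φ u hφ hu hφ_eq hu_eq hφ0 hua hub
  have hii {f : ℝ → ℝ} (hf : IntegrableOn f (Set.Ioc a b)) : IntervalIntegrable f volume a b :=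
    (intervalIntegrable_iff_integrableOn_Ioc_of_le hab.le).2 hf
  have hg : IsPrimitiveOn g g' a b :=
    ⟨hii (hg'int.mono_set Set.Ioc_subset_Icc_self), Set.uIcc_of_le hab.le ▸ hgAC⟩
  have hsol := IsSturmLiouvilleSolution.of_integral_eq hab.le (hii hp_int) (hii hq_int)
    (hii hw_int) hφ hu hφ_eq hu_eq
  rw [Measure.restrict_congr_set Ioc_ae_eq_Icc] at hp_pos hgw
  have hbounds := nonreal_eigenvalue_bounds_separated_general hab hp_pos (hii hp_int)
    (hii hq_int) (hii hw_int) hα hβ hγ hg hga hgb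
    (by simpa only [Real.norm_eq_abs, sq_abs] using hii hg'2) (hgw.mono fun _ => le_of_lt) hε
    (by simpa only [mul_assoc] using hεcond) hsol hlam hφ0
    (by rw [boundaryForm_of_separated hua hub, ofReal_im])
    (hc ▸ re_boundaryForm_le_of_separated hab.le hφ hua hub)
  simpa only [weightedNorm, supNormOn, Real.norm_eq_abs, sq_abs, mul_assoc] using hbounds
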